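/- arXiv:2003.01449 — 3 statements merged into one kernel-verified Lean document; each statement's English description precedes it below -/
import Mathlib

section
/- (Short-distance Green function estimate.) For every integer N ≥ 3 and every s with 0 < s < 1, there exist constants R₁ > 0, C₁ > 0 and C₁' > 0, depending only on N and s, such that C₁ · r^{-(N-2s)} ≤ F_{N,s}(r) ≤ C₁' · r^{-(N-2s)} for all r with 0 < r ≤ R₁. -/
open Real MeasureTheory Set Filter

/-- The explicit function comparable to the heat kernel of hyperbolic space `ℍ^N`
at geodesic distance `r`. -/
noncomputable def hN (N : ℕ) (t r : ℝ) : ℝ :=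
  (4 * π * t) ^ (-(N : ℝ) / 2) *
    Real.exp (-(((N : ℝ) - 1) ^ 2 * t) / 4 - ((N : ℝ) - 1) * r / 2 - r ^ 2 / (4 * t)) *
    (1 + r + t) ^ (((N : ℝ) - 3) / 2) * (1 + r)

/-- `F N s r = ∫₀^∞ h_N(t,r) t^{s-1} dt`, comparable to the Green function of
`(-Δ_{ℍ^N})^s` at geodesic distance `r`. -/
noncomputable def F (N : ℕ) (s r : ℝ) : ℝ :=
  ∫ t in Ioi (0 : ℝ), hN N t r * t ^ (s - 1)

/-!
`h_N` is the Euclidean heat kernel times a weight that is bounded on `0 < r ≤ R`, `0 < t` (the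
exponential in `t` beats the power) and bounded away from zero for bounded `r` and `t`. Integrating
the Euclidean part against `t ^ (s - 1)` gives an inverse gamma integral,
`∫ t ^ (-q - 1) * exp (-(b / t)) = Γ(q) * b ^ (-q)` with `q = N / 2 - s` and `b = r ^ 2 / 4`,
so `F` is at most a multiple of `r ^ (-2 * q)`. The range `b ≤ t ≤ 2 * b` alone already contributes
a multiple of `r ^ (-2 * q)`.
-/

/-- The unnormalised density of the inverse gamma distribution with shape `q` and scale `b`. With
`q = N / 2 - s` and `b = r ^ 2 / 4` it is, up to a constant, the Euclidean heat kernel times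
`t ^ (s - 1)`. -/
noncomputable def invGammaKernel (q b t : ℝ) : ℝ :=
  t ^ (-q - 1) * exp (-(b / t))

section InvGammaKernel

variable {q b t c C : ℝ} {w : ℝ → ℝ}

lemma invGammaKernel_nonneg (q b : ℝ) (ht : 0 ≤ t) : 0 ≤ invGammaKernel q b t := by
  unfold invGammaKernel
  positivity

lemma integral_invGammaKernel (hq : 0 < q) (hb : 0 < b) :
    ∫ t in Ioi 0, invGammaKernel q b t = Gamma q * b ^ (-q) := by
  calc
    ∫ t in Ioi 0, invGammaKernel q b t
        = ∫ t in Ioi (0 : ℝ), (|(-1 : ℝ)| * t ^ ((-1 : ℝ) - 1)) •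
            ((t ^ (-1 : ℝ)) ^ (q - 1) * exp (-(b * t ^ (-1 : ℝ)))) := by
      refine setIntegral_congr_fun measurableSet_Ioi fun t (ht : 0 < t) => ?_
      have hpow : t ^ (-q - 1) = t ^ ((-1 : ℝ) - 1) * (t ^ (-1 : ℝ)) ^ (q - 1) := by
        rw [← rpow_mul ht.le, ← rpow_add ht]
        ring_nf
      simp only [invGammaKernel, hpow, rpow_neg_one, abs_neg, abs_one, smul_eq_mul, div_eq_mul_inv,
        one_mul, mul_assoc]
    _ = ∫ u in Ioi (0 : ℝ), u ^ (q - 1) * exp (-(b * u)) :=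
      integral_comp_rpow_Ioi (fun u : ℝ => u ^ (q - 1) * exp (-(b * u))) (by norm_num)
    _ = Gamma q * b ^ (-q) := by
      rw [integral_rpow_mul_exp_neg_mul_Ioi hq hb, one_div, inv_rpow hb.le, rpow_neg hb.le,
        mul_comm]

lemma integrableOn_invGammaKernel (hq : 0 < q) (hb : 0 < b) :
    IntegrableOn (invGammaKernel q b) (Ioi 0) := by
  refine Integrable.of_integral_ne_zero ?_
  rw [integral_invGammaKernel hq hb]
  exact (mul_pos (Gamma_pos_of_pos hq) (rpow_pos_of_pos hb _)).ne'

lemma le_invGammaKernel (hq : -1 ≤ q) (hb : 0 < b) (ht : t ∈ Icc b (2 * b)) :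
    (2 * b) ^ (-q - 1) * exp (-1) ≤ invGammaKernel q b t := by
  have ht0 : 0 < t := hb.trans_le ht.1
  have hpow : (2 * b) ^ (-q - 1) ≤ t ^ (-q - 1) :=
    rpow_le_rpow_of_nonpos ht0 ht.2 (by linarith)
  have hexp : exp (-1) ≤ exp (-(b / t)) :=
    exp_le_exp.2 (neg_le_neg ((div_le_one ht0).2 ht.1))
  exact mul_le_mul hpow hexp (exp_pos _).le (by positivity)

lemma integrableOn_mul_invGammaKernel (hq : 0 < q) (hb : 0 < b)
    (hw : AEStronglyMeasurable w (volume.restrict (Ioi 0))) (hwC : ∀ t, 0 < t → |w t| ≤ C) :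
    IntegrableOn (fun t => w t * invGammaKernel q b t) (Ioi 0) :=
  (integrableOn_invGammaKernel hq hb).bdd_mul hw (ae_restrict_of_forall_mem measurableSet_Ioi hwC)

lemma integral_mul_invGammaKernel_le (hq : 0 < q) (hb : 0 < b)
    (hw0 : ∀ t, 0 < t → 0 ≤ w t) (hwC : ∀ t, 0 < t → w t ≤ C) :
    ∫ t in Ioi 0, w t * invGammaKernel q b t ≤ C * Gamma q * b ^ (-q) := by
  calc
    ∫ t in Ioi 0, w t * invGammaKernel q b t ≤ ∫ t in Ioi 0, C * invGammaKernel q b t := by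
      refine integral_mono_of_nonneg ?_ ((integrableOn_invGammaKernel hq hb).const_mul C) ?_
      · exact ae_restrict_of_forall_mem measurableSet_Ioi fun t (ht : 0 < t) =>
          mul_nonneg (hw0 t ht) (invGammaKernel_nonneg q b ht.le)
      · exact ae_restrict_of_forall_mem measurableSet_Ioi fun t (ht : 0 < t) =>
          mul_le_mul_of_nonneg_right (hwC t ht) (invGammaKernel_nonneg q b ht.le)
    _ = C * Gamma q * b ^ (-q) := by
      rw [integral_const_mul, integral_invGammaKernel hq hb, mul_assoc]

lemma le_integral_mul_invGammaKernel (hq : -1 ≤ q) (hb : 0 < b) (hc : 0 ≤ c)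
    (hint : IntegrableOn (fun t => w t * invGammaKernel q b t) (Ioi 0))
    (hw0 : ∀ t, 0 < t → 0 ≤ w t) (hcw : ∀ t ∈ Icc b (2 * b), c ≤ w t) :
    c * (2 ^ (-q - 1) * exp (-1)) * b ^ (-q) ≤ ∫ t in Ioi 0, w t * invGammaKernel q b t := by
  have hsub : Icc b (2 * b) ⊆ Ioi 0 := fun t ht => hb.trans_le ht.1
  have hvol : volume.real (Icc b (2 * b)) = b := by
    rw [volume_real_Icc_of_le (by linarith)]
    ring
  have hpow : (2 * b) ^ (-q - 1) * b = 2 ^ (-q - 1) * b ^ (-q) := by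
    rw [mul_rpow zero_le_two hb.le, mul_assoc, ← rpow_add_one hb.ne', sub_add_cancel]
  calc
    c * (2 ^ (-q - 1) * exp (-1)) * b ^ (-q) = c * ((2 * b) ^ (-q - 1) * exp (-1)) * b := by
      linear_combination -(c * exp (-1)) * hpow
    _ ≤ ∫ t in Icc b (2 * b), w t * invGammaKernel q b t := by
      have h := setIntegral_ge_of_const_le_real (μ := volume) measurableSet_Icc
        measure_Icc_lt_top.ne
        (fun t ht => mul_le_mul (hcw t ht) (le_invGammaKernel hq hb ht) (by positivity)
          (hc.trans (hcw t ht)))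
        (hint.mono_set hsub)
      rwa [hvol] at h
    _ ≤ ∫ t in Ioi 0, w t * invGammaKernel q b t :=
      setIntegral_mono_set hint
        (ae_restrict_of_forall_mem measurableSet_Ioi fun t (ht : 0 < t) =>
          mul_nonneg (hw0 t ht) (invGammaKernel_nonneg q b ht.le))
        hsub.eventuallyLE

end InvGammaKernel

/-- The ratio of `hN N t r` to the Euclidean heat kernel
`(4 * π * t) ^ (-N / 2) * exp (-(r ^ 2 / (4 * t)))`. -/
noncomputable def hyperbolicWeight (N : ℕ) (r t : ℝ) : ℝ :=
  exp (-(((N : ℝ) - 1) ^ 2 / 4 * t)) * exp (-(((N : ℝ) - 1) / 2 * r)) *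
    (1 + r + t) ^ (((N : ℝ) - 3) / 2) * (1 + r)

section HyperbolicWeight

variable {r t : ℝ}

lemma hyperbolicWeight_pos (N : ℕ) (hr : 0 ≤ r) (ht : 0 ≤ t) : 0 < hyperbolicWeight N r t := by
  unfold hyperbolicWeight
  positivity

lemma measurable_hyperbolicWeight (N : ℕ) (r : ℝ) : Measurable (hyperbolicWeight N r) := by
  unfold hyperbolicWeight
  fun_prop

lemma continuousOn_hyperbolicWeight (N : ℕ) :
    ContinuousOn (fun p : ℝ × ℝ => hyperbolicWeight N p.1 p.2) (Ici 0 ×ˢ Ici 0) := by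
  have hbase : ∀ p ∈ Ici (0 : ℝ) ×ˢ Ici (0 : ℝ), 1 + p.1 + p.2 ≠ 0 := fun p hp => by
    have h₁ : 0 ≤ p.1 := hp.1
    have h₂ : 0 ≤ p.2 := hp.2
    positivity
  have hpow : ContinuousOn (fun p : ℝ × ℝ => (1 + p.1 + p.2) ^ (((N : ℝ) - 3) / 2))
      (Ici 0 ×ˢ Ici 0) :=
    ContinuousOn.rpow_const (by fun_prop) fun p hp => Or.inl (hbase p hp)
  unfold hyperbolicWeight
  fun_prop

lemma exists_pos_forall_le_hyperbolicWeight (N : ℕ) (R T : ℝ) :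
    ∃ c > 0, ∀ r ∈ Icc 0 R, ∀ t ∈ Icc 0 T, c ≤ hyperbolicWeight N r t := by
  have hsub : Icc 0 R ×ˢ Icc 0 T ⊆ Ici (0 : ℝ) ×ˢ Ici (0 : ℝ) :=
    prod_mono Icc_subset_Ici_self Icc_subset_Ici_self
  obtain ⟨c, hc, hle⟩ := (isCompact_Icc.prod isCompact_Icc).exists_forall_le'
    ((continuousOn_hyperbolicWeight N).mono hsub)
    fun p hp => hyperbolicWeight_pos N (hsub hp).1 (hsub hp).2
  exact ⟨c, hc, fun r hr t ht => hle (r, t) ⟨hr, ht⟩⟩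

lemma one_add_add_rpow_le (hr : 0 ≤ r) (ht : 0 ≤ t) {a p : ℝ} (hap : a ≤ p) (hp : 0 ≤ p) :
    (1 + r + t) ^ a ≤ (1 + r) ^ p * exp (p * t) := by
  calc
    (1 + r + t) ^ a ≤ (1 + r + t) ^ p := rpow_le_rpow_of_exponent_le (by linarith) hap
    _ ≤ ((1 + r) * exp t) ^ p := by
      refine rpow_le_rpow (by positivity) ?_ hp
      calc
        1 + r + t ≤ (1 + r) * (t + 1) := by linarith [mul_nonneg hr ht]
        _ ≤ (1 + r) * exp t := by
          gcongr
          exact add_one_le_exp t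
    _ = (1 + r) ^ p * exp (p * t) := by
      rw [mul_rpow (by positivity) (exp_pos t).le, ← exp_mul, mul_comm t]

lemma hyperbolicWeight_le (N : ℕ) (hr : 0 ≤ r) (ht : 0 ≤ t) :
    hyperbolicWeight N r t ≤ exp (r / 2) * (1 + r) ^ (((N : ℝ) - 1) ^ 2 / 4) * (1 + r) := by
  set p : ℝ := ((N : ℝ) - 1) ^ 2 / 4 with hp
  have hp0 : 0 ≤ p := by positivity
  have hap : ((N : ℝ) - 3) / 2 ≤ p := by
    rw [hp]
    linarith [sq_nonneg ((N : ℝ) - 2)]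
  have hexp : exp (-(((N : ℝ) - 1) / 2 * r)) ≤ exp (r / 2) :=
    exp_le_exp.2 (by linarith [mul_nonneg N.cast_nonneg hr])
  calc
    hyperbolicWeight N r t
        ≤ exp (-(p * t)) * exp (r / 2) * ((1 + r) ^ p * exp (p * t)) * (1 + r) := by
      unfold hyperbolicWeight
      gcongr
      exact one_add_add_rpow_le hr ht hap hp0
    _ = exp (r / 2) * (1 + r) ^ p * (1 + r) := by
      have hcancel : exp (-(p * t)) * exp (p * t) = 1 := by rw [← exp_add, neg_add_cancel, exp_zero]
      linear_combination exp (r / 2) * (1 + r) ^ p * (1 + r) * hcancel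

lemma exists_pos_forall_hyperbolicWeight_le (N : ℕ) (R : ℝ) :
    ∃ C > 0, ∀ r ∈ Icc 0 R, ∀ t ∈ Ici 0, hyperbolicWeight N r t ≤ C := by
  refine ⟨exp (|R| / 2) * (1 + |R|) ^ (((N : ℝ) - 1) ^ 2 / 4) * (1 + |R|), by positivity,
    fun r ⟨hr, hrR⟩ t ht => (hyperbolicWeight_le N hr ht).trans ?_⟩
  have hrR' : r ≤ |R| := hrR.trans (le_abs_self R)
  gcongr

end HyperbolicWeight

lemma hN_mul_rpow_eq (N : ℕ) (s r : ℝ) {t : ℝ} (ht : 0 < t) :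
    hN N t r * t ^ (s - 1) =
      (4 * π) ^ (-(N : ℝ) / 2) *
        (hyperbolicWeight N r t * invGammaKernel ((N : ℝ) / 2 - s) (r ^ 2 / 4) t) := by
  have hbase : (4 * π * t) ^ (-(N : ℝ) / 2) = (4 * π) ^ (-(N : ℝ) / 2) * t ^ (-(N : ℝ) / 2) :=
    mul_rpow (by positivity) ht.le
  have hpow : t ^ (-((N : ℝ) / 2 - s) - 1) = t ^ (-(N : ℝ) / 2) * t ^ (s - 1) := by
    rw [← rpow_add ht]
    ring_nf
  have hexp : exp (-(((N : ℝ) - 1) ^ 2 * t) / 4 - ((N : ℝ) - 1) * r / 2 - r ^ 2 / (4 * t)) =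
      exp (-(((N : ℝ) - 1) ^ 2 / 4 * t)) * exp (-(((N : ℝ) - 1) / 2 * r)) *
        exp (-(r ^ 2 / 4 / t)) := by
    rw [← exp_add, ← exp_add, div_div]
    ring_nf
  rw [hN, hyperbolicWeight, invGammaKernel, hbase, hpow, hexp]
  ring

lemma F_eq (N : ℕ) (s r : ℝ) :
    F N s r = (4 * π) ^ (-(N : ℝ) / 2) *
      ∫ t in Ioi 0, hyperbolicWeight N r t * invGammaKernel ((N : ℝ) / 2 - s) (r ^ 2 / 4) t := by
  rw [F, ← integral_const_mul]
  exact setIntegral_congr_fun measurableSet_Ioi fun t ht => hN_mul_rpow_eq N s r ht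

lemma sq_div_four_rpow {r : ℝ} (hr : 0 < r) (q : ℝ) :
    (r ^ 2 / 4) ^ (-q) = 4 ^ q * r ^ (-(2 * q)) := by
  rw [div_rpow (by positivity) (by norm_num), rpow_neg (by norm_num : (0 : ℝ) ≤ 4), div_inv_eq_mul,
    ← rpow_natCast_mul hr.le, mul_comm, Nat.cast_ofNat, mul_neg]

theorem F_short_distance_estimate_general (N : ℕ) (s : ℝ) (hs : 2 * s < N) (R : ℝ) :
    ∃ C₁ > (0 : ℝ), ∃ C₁' > (0 : ℝ),
      ∀ r : ℝ, 0 < r → r ≤ R →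
        C₁ * r ^ (-((N : ℝ) - 2 * s)) ≤ F N s r ∧
          F N s r ≤ C₁' * r ^ (-((N : ℝ) - 2 * s)) := by
  set q : ℝ := (N : ℝ) / 2 - s with hq
  have hq0 : 0 < q := by linarith
  have hqN : (N : ℝ) - 2 * s = 2 * q := by
    rw [hq]
    ring
  obtain ⟨c, hc, hcw⟩ := exists_pos_forall_le_hyperbolicWeight N R (R ^ 2 / 2)
  obtain ⟨C, hC, hwC⟩ := exists_pos_forall_hyperbolicWeight_le N R
  refine ⟨(4 * π) ^ (-(N : ℝ) / 2) * (c * (2 ^ (-q - 1) * exp (-1)) * 4 ^ q), by positivity,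
    (4 * π) ^ (-(N : ℝ) / 2) * (C * Gamma q * 4 ^ q), by positivity, fun r hr hrR => ?_⟩
  have hb : 0 < r ^ 2 / 4 := by positivity
  have hbR : 2 * (r ^ 2 / 4) ≤ R ^ 2 / 2 := by linarith [pow_le_pow_left₀ hr.le hrR 2]
  have hw0 : ∀ t, 0 < t → 0 ≤ hyperbolicWeight N r t := fun t ht =>
    (hyperbolicWeight_pos N hr.le ht.le).le
  have hw_le : ∀ t, 0 < t → hyperbolicWeight N r t ≤ C := fun t ht =>
    hwC r ⟨hr.le, hrR⟩ t ht.le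
  have hint := integrableOn_mul_invGammaKernel hq0 hb
    (measurable_hyperbolicWeight N r).aestronglyMeasurable
    fun t ht => (abs_of_nonneg (hw0 t ht)).trans_le (hw_le t ht)
  have hlower := le_integral_mul_invGammaKernel (by linarith) hb hc.le hint hw0 fun t ht =>
    hcw r ⟨hr.le, hrR⟩ t ⟨hb.le.trans ht.1, ht.2.trans hbR⟩
  have hupper := integral_mul_invGammaKernel_le hq0 hb hw0 hw_le
  rw [sq_div_four_rpow hr, ← mul_assoc _ (4 ^ q)] at hlower hupper
  rw [F_eq, hqN, mul_assoc ((4 * π) ^ _), mul_assoc ((4 * π) ^ _)]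
  exact ⟨mul_le_mul_of_nonneg_left hlower (by positivity),
    mul_le_mul_of_nonneg_left hupper (by positivity)⟩

theorem F_short_distance_estimate (N : ℕ) (hN3 : 3 ≤ N) (s : ℝ) (hs0 : 0 < s) (hs1 : s < 1) :
    ∃ R₁ > (0 : ℝ), ∃ C₁ > (0 : ℝ), ∃ C₁' > (0 : ℝ),
      ∀ r : ℝ, 0 < r → r ≤ R₁ →
        C₁ * r ^ (-((N : ℝ) - 2 * s)) ≤ F N s r ∧
          F N s r ≤ C₁' * r ^ (-((N : ℝ) - 2 * s)) := by
  have hN3_real : (3 : ℝ) ≤ N := mod_cast hN3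
  exact ⟨1, one_pos, F_short_distance_estimate_general N s (by linarith) 1⟩
end

section
/- For every integer N ≥ 3 and every s with 0 < s < 1, there exist constants C₃ > 0 and C₃' > 0, depending only on N and s, such that C₃ · r^{-(N-2s)} ≤ F_{N,s}(r) ≤ C₃' · r^{-(N-2s)} for all r with 0 < r ≤ 1. -/
/-!
The function `h_N` is the Euclidean heat kernel `(4πt)^{-N/2} e^{-r²/(4t)}` times a factor which
carries the effect of curvature. For `r ≤ R` this factor is bounded above for all times, because
`(N - 3) / 2 ≤ (N - 1)² / 4` lets the exponential decay absorb the power of `1 + r + t`, and it is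
bounded below for times `t ≤ r²` by compactness. The integral of the Euclidean heat kernel against
`t^{s-1}` is homogeneous of degree `2s - N` under parabolic scaling `t = r² u`, which turns these
two bounds into the two estimates.
-/

open Real MeasureTheory Set Filter

/-- The heat kernel of `d`-dimensional Euclidean space at time `t` and distance `r`, with a real
parameter `d` as the dimension. -/
noncomputable def euclideanHeatKernel (d t r : ℝ) : ℝ :=
  (4 * π * t) ^ (-d / 2) * exp (-(r ^ 2 / (4 * t)))

/-- The integrand whose integral over `t > 0` is, up to the constant `1 / Γ(s)`, the Riesz kernel:
the Green function at distance `r` of the fractional Laplacian `(-Δ)^s`, `0 < s < d / 2`, on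
`d`-dimensional Euclidean space. -/
noncomputable def rieszIntegrand (d s t r : ℝ) : ℝ :=
  euclideanHeatKernel d t r * t ^ (s - 1)

/-- The ratio of the hyperbolic profile `hN` to the Euclidean heat kernel, with a real parameter
`d` as the dimension. -/
noncomputable def curvatureFactor (d t r : ℝ) : ℝ :=
  exp (-((d - 1) ^ 2 * t) / 4 - (d - 1) * r / 2) * (1 + r + t) ^ ((d - 3) / 2) * (1 + r)

lemma hN_eq_euclideanHeatKernel_mul_curvatureFactor (N : ℕ) (t r : ℝ) :
    hN N t r = euclideanHeatKernel N t r * curvatureFactor N t r := by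
  rw [hN, euclideanHeatKernel, curvatureFactor, sub_eq_add_neg _ (r ^ 2 / (4 * t)), exp_add]
  ring

lemma F_eq_setIntegral_rieszIntegrand_mul_curvatureFactor (N : ℕ) (s r : ℝ) :
    F N s r = ∫ t in Ioi (0 : ℝ), rieszIntegrand N s t r * curvatureFactor N t r := by
  simp only [F, hN_eq_euclideanHeatKernel_mul_curvatureFactor, rieszIntegrand, mul_right_comm]

section RieszIntegrand

variable {d s t r : ℝ}

lemma rieszIntegrand_pos (ht : 0 < t) : 0 < rieszIntegrand d s t r := by
  unfold rieszIntegrand euclideanHeatKernel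
  positivity

lemma rieszIntegrand_eq_comp_inv (ht : 0 < t) :
    rieszIntegrand d s t r =
      (4 * π) ^ (-d / 2) *
        (t ^ (-2 : ℝ) * (t⁻¹ ^ (d / 2 - s - 1) * exp (-(r ^ 2 / 4) * t⁻¹))) := by
  have hpow : t ^ (-d / 2) * t ^ (s - 1) = t ^ (-2 : ℝ) * t⁻¹ ^ (d / 2 - s - 1) := by
    rw [inv_rpow ht.le, ← rpow_neg ht.le, ← rpow_add ht, ← rpow_add ht]
    ring_nf
  have hexp : -(r ^ 2 / (4 * t)) = -(r ^ 2 / 4) * t⁻¹ := by field_simp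
  rw [rieszIntegrand, euclideanHeatKernel, mul_rpow (by positivity) ht.le, hexp]
  linear_combination (4 * π) ^ (-d / 2) * exp (-(r ^ 2 / 4) * t⁻¹) * hpow

lemma integrableOn_rieszIntegrand (hs : s < d / 2) (hr : r ≠ 0) :
    IntegrableOn (fun t => rieszIntegrand d s t r) (Ioi 0) := by
  have hgamma : IntegrableOn
      (fun v : ℝ => v ^ (d / 2 - s - 1) * exp (-(r ^ 2 / 4) * v)) (Ioi 0) := by
    simpa only [rpow_one] using integrableOn_rpow_mul_exp_neg_mul_rpow (p := 1)
      (by linarith : -1 < d / 2 - s - 1) one_pos (by positivity : 0 < r ^ 2 / 4)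
  have hinv := (integrableOn_Ioi_comp_rpow_iff' _ (p := -1) (by norm_num)).2 hgamma
  refine IntegrableOn.congr_fun (hinv.const_mul ((4 * π) ^ (-d / 2))) (fun t ht => ?_)
    measurableSet_Ioi
  simp only [rieszIntegrand_eq_comp_inv ht, smul_eq_mul, rpow_neg_one]
  norm_num

lemma setIntegral_rieszIntegrand_pos (hs : s < d / 2) (hr : r ≠ 0) {A : Set ℝ}
    (hA : MeasurableSet A) (hA₀ : A ⊆ Ioi 0) (hvol : 0 < volume A) :
    0 < ∫ t in A, rieszIntegrand d s t r := by
  have hpos : ∀ t ∈ A, 0 < rieszIntegrand d s t r := fun t ht => rieszIntegrand_pos (hA₀ ht)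
  rw [setIntegral_pos_iff_support_of_nonneg_ae
    (ae_restrict_of_forall_mem hA fun t ht => (hpos t ht).le)
    ((integrableOn_rieszIntegrand hs hr).mono_set hA₀)]
  have hsupport : A ⊆ Function.support fun t => rieszIntegrand d s t r :=
    fun t ht => (hpos t ht).ne'
  rwa [inter_eq_right.2 hsupport]

lemma euclideanHeatKernel_sq_mul (hr : 0 < r) (ht : 0 < t) :
    euclideanHeatKernel d (r ^ 2 * t) r = r ^ (-d) * euclideanHeatKernel d t 1 := by
  have hpow : (4 * π * (r ^ 2 * t)) ^ (-d / 2) = r ^ (-d) * (4 * π * t) ^ (-d / 2) := by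
    rw [mul_left_comm, mul_rpow (by positivity) (by positivity), ← rpow_natCast_mul hr.le]
    ring_nf
  have hexp : r ^ 2 / (4 * (r ^ 2 * t)) = 1 ^ 2 / (4 * t) := by field_simp
  rw [euclideanHeatKernel, euclideanHeatKernel, hpow, hexp, mul_assoc]

lemma sq_mul_rieszIntegrand_sq_mul (hr : 0 < r) (ht : 0 < t) :
    r ^ 2 * rieszIntegrand d s (r ^ 2 * t) r = r ^ (-(d - 2 * s)) * rieszIntegrand d s t 1 := by
  have hpow : r ^ 2 * r ^ (-d) * (r ^ 2) ^ (s - 1) = r ^ (-(d - 2 * s)) := by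
    rw [← rpow_natCast_mul hr.le, ← rpow_natCast, ← rpow_add hr, ← rpow_add hr]
    push_cast
    ring_nf
  rw [rieszIntegrand, rieszIntegrand, euclideanHeatKernel_sq_mul hr ht,
    mul_rpow (by positivity) ht.le, ← hpow]
  ring

open scoped Pointwise in
lemma setIntegral_sq_smul_rieszIntegrand (hr : 0 < r) {A : Set ℝ} (hA : MeasurableSet A)
    (hA₀ : A ⊆ Ioi 0) :
    ∫ t in r ^ 2 • A, rieszIntegrand d s t r =
      r ^ (-(d - 2 * s)) * ∫ t in A, rieszIntegrand d s t 1 := by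
  have hr2 : 0 < r ^ 2 := by positivity
  have hsubst := Measure.setIntegral_comp_smul_of_pos volume
    (fun t => rieszIntegrand d s t r) A hr2
  simp only [Module.finrank_self, pow_one, smul_eq_mul] at hsubst
  rw [← mul_inv_cancel_left₀ hr2.ne' (∫ t in r ^ 2 • A, _), ← hsubst, ← integral_const_mul,
    ← integral_const_mul]
  exact setIntegral_congr_fun hA fun t ht => sq_mul_rieszIntegrand_sq_mul hr (hA₀ ht)

lemma setIntegral_Ioi_rieszIntegrand (hr : 0 < r) :
    ∫ t in Ioi 0, rieszIntegrand d s t r =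
      r ^ (-(d - 2 * s)) * ∫ t in Ioi 0, rieszIntegrand d s t 1 := by
  rw [← setIntegral_sq_smul_rieszIntegrand hr measurableSet_Ioi Subset.rfl,
    LinearOrderedField.smul_Ioi (by positivity), mul_zero]

lemma setIntegral_Ioc_sq_rieszIntegrand (hr : 0 < r) :
    ∫ t in Ioc 0 (r ^ 2), rieszIntegrand d s t r =
      r ^ (-(d - 2 * s)) * ∫ t in Ioc 0 1, rieszIntegrand d s t 1 := by
  rw [← setIntegral_sq_smul_rieszIntegrand hr measurableSet_Ioc Ioc_subset_Ioi_self,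
    LinearOrderedField.smul_Ioc (by positivity), mul_zero, mul_one]

end RieszIntegrand

lemma one_add_rpow_le_exp_mul {p q x : ℝ} (hpq : p ≤ q) (hq : 0 ≤ q) (hx : 0 ≤ x) :
    (1 + x) ^ p ≤ exp (q * x) :=
  calc (1 + x) ^ p ≤ (1 + x) ^ q := rpow_le_rpow_of_exponent_le (by linarith) hpq
    _ ≤ exp x ^ q := by gcongr; linarith [add_one_le_exp x]
    _ = exp (q * x) := by rw [← exp_mul, mul_comm]

section CurvatureFactor

variable {d t r : ℝ}

lemma curvatureFactor_pos (ht : 0 ≤ t) (hr : 0 ≤ r) : 0 < curvatureFactor d t r := by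
  unfold curvatureFactor
  positivity

lemma measurable_curvatureFactor : Measurable fun t => curvatureFactor d t r := by
  unfold curvatureFactor
  fun_prop

lemma curvatureFactor_le_exp (hd : 0 ≤ d) (ht : 0 ≤ t) (hr : 0 ≤ r) :
    curvatureFactor d t r ≤ exp (3 / 2 * r) := by
  set q := max ((d - 3) / 2) 0
  have hq_decay : q ≤ (d - 1) ^ 2 / 4 := max_le (by nlinarith [sq_nonneg (d - 2)]) (by positivity)
  have hq_dim : q ≤ d / 2 := max_le (by linarith) (by positivity)
  calc curvatureFactor d t r
      ≤ exp (-((d - 1) ^ 2 * t) / 4 - (d - 1) * r / 2) * exp (q * (r + t)) * exp r := by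
        unfold curvatureFactor
        gcongr
        · rw [add_assoc]
          exact one_add_rpow_le_exp_mul (le_max_left _ _) (le_max_right _ _) (by positivity)
        · linarith [add_one_le_exp r]
    _ = exp ((q - (d - 1) ^ 2 / 4) * t + (q - d / 2) * r + 3 / 2 * r) := by
        rw [← exp_add, ← exp_add]
        ring_nf
    _ ≤ exp (3 / 2 * r) := by
        have htime := mul_nonpos_of_nonpos_of_nonneg (sub_nonpos.2 hq_decay) ht
        have hspace := mul_nonpos_of_nonpos_of_nonneg (sub_nonpos.2 hq_dim) hr
        gcongr
        linarith

lemma continuousOn_curvatureFactor :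
    ContinuousOn (fun x : ℝ × ℝ => curvatureFactor d x.1 x.2) (Ici 0 ×ˢ Ici 0) := by
  have hpow : ContinuousOn (fun x : ℝ × ℝ => (1 + x.2 + x.1) ^ ((d - 3) / 2))
      (Ici 0 ×ˢ Ici 0) := by
    refine ContinuousOn.rpow_const (by fun_prop) fun x ⟨ht, hr⟩ => Or.inl ?_
    have ht : 0 ≤ x.1 := ht
    have hr : 0 ≤ x.2 := hr
    positivity
  unfold curvatureFactor
  fun_prop

lemma exists_pos_forall_le_curvatureFactor (d T R : ℝ) :
    ∃ c > 0, ∀ t ∈ Icc 0 T, ∀ r ∈ Icc 0 R, c ≤ curvatureFactor d t r := by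
  have hsub : Icc 0 T ×ˢ Icc 0 R ⊆ Ici 0 ×ˢ Ici 0 :=
    Set.prod_mono Icc_subset_Ici_self Icc_subset_Ici_self
  obtain ⟨c, hc, hle⟩ := (isCompact_Icc.prod isCompact_Icc).exists_forall_le'
    (continuousOn_curvatureFactor (d := d).mono hsub)
    fun x hx => curvatureFactor_pos hx.1.1 hx.2.1
  exact ⟨c, hc, fun t ht r hr => hle (t, r) ⟨ht, hr⟩⟩

end CurvatureFactor

section Comparison

variable {N : ℕ} {s r : ℝ}

lemma integrableOn_rieszIntegrand_mul_curvatureFactor (hs : s < N / 2) (hr : 0 < r) :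
    IntegrableOn (fun t => rieszIntegrand N s t r * curvatureFactor N t r) (Ioi 0) := by
  refine (integrableOn_rieszIntegrand hs hr.ne').mul_bdd (c := exp (3 / 2 * r))
    measurable_curvatureFactor.aestronglyMeasurable
    (ae_restrict_of_forall_mem measurableSet_Ioi fun t (ht : 0 < t) => ?_)
  rw [norm_of_nonneg (curvatureFactor_pos ht.le hr.le).le]
  exact curvatureFactor_le_exp N.cast_nonneg ht.le hr.le

lemma F_le_exp_mul_rpow (hs : s < N / 2) (hr : 0 < r) :
    F N s r ≤ exp (3 / 2 * r) *
      (r ^ (-(N - 2 * s)) * ∫ t in Ioi 0, rieszIntegrand N s t 1) := by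
  rw [F_eq_setIntegral_rieszIntegrand_mul_curvatureFactor, ← setIntegral_Ioi_rieszIntegrand hr,
    ← integral_const_mul]
  refine setIntegral_mono_on (integrableOn_rieszIntegrand_mul_curvatureFactor hs hr)
    ((integrableOn_rieszIntegrand hs hr.ne').const_mul _) measurableSet_Ioi
    fun t (ht : 0 < t) => ?_
  rw [mul_comm]
  exact mul_le_mul_of_nonneg_right (curvatureFactor_le_exp N.cast_nonneg ht.le hr.le)
    (rieszIntegrand_pos ht).le

lemma mul_rpow_le_F {c : ℝ} (hs : s < N / 2) (hr : 0 < r)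
    (hc : ∀ t ∈ Ioc 0 (r ^ 2), c ≤ curvatureFactor N t r) :
    c * (r ^ (-(N - 2 * s)) * ∫ t in Ioc 0 1, rieszIntegrand N s t 1) ≤ F N s r := by
  have hint := integrableOn_rieszIntegrand_mul_curvatureFactor hs hr
  calc c * (r ^ (-(N - 2 * s)) * ∫ t in Ioc 0 1, rieszIntegrand N s t 1)
      = ∫ t in Ioc 0 (r ^ 2), c * rieszIntegrand N s t r := by
        rw [← setIntegral_Ioc_sq_rieszIntegrand hr, integral_const_mul]
    _ ≤ ∫ t in Ioc 0 (r ^ 2), rieszIntegrand N s t r * curvatureFactor N t r := by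
        refine setIntegral_mono_on
          (((integrableOn_rieszIntegrand hs hr.ne').mono_set Ioc_subset_Ioi_self).const_mul c)
          (hint.mono_set Ioc_subset_Ioi_self) measurableSet_Ioc fun t ht => ?_
        rw [mul_comm]
        exact mul_le_mul_of_nonneg_left (hc t ht) (rieszIntegrand_pos ht.1).le
    _ ≤ ∫ t in Ioi 0, rieszIntegrand N s t r * curvatureFactor N t r :=
        setIntegral_mono_set hint
          (ae_restrict_of_forall_mem measurableSet_Ioi fun t (ht : 0 < t) =>
            (mul_pos (rieszIntegrand_pos ht) (curvatureFactor_pos ht.le hr.le)).le)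
          Ioc_subset_Ioi_self.eventuallyLE
    _ = F N s r := (F_eq_setIntegral_rieszIntegrand_mul_curvatureFactor N s r).symm

end Comparison

theorem F_estimate_le_one_general (N : ℕ) (s : ℝ) (hs : s < N / 2) (R : ℝ) :
    ∃ C₃ > (0 : ℝ), ∃ C₃' > (0 : ℝ),
      ∀ r : ℝ, 0 < r → r ≤ R →
        C₃ * r ^ (-((N : ℝ) - 2 * s)) ≤ F N s r ∧
          F N s r ≤ C₃' * r ^ (-((N : ℝ) - 2 * s)) := by
  obtain ⟨c, hc, hle⟩ := exists_pos_forall_le_curvatureFactor N (R ^ 2) R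
  have hIoc : 0 < ∫ t in Ioc 0 1, rieszIntegrand N s t 1 :=
    setIntegral_rieszIntegrand_pos hs one_ne_zero measurableSet_Ioc Ioc_subset_Ioi_self (by simp)
  have hIoi : 0 < ∫ t in Ioi 0, rieszIntegrand N s t 1 :=
    setIntegral_rieszIntegrand_pos hs one_ne_zero measurableSet_Ioi Subset.rfl (by simp)
  refine ⟨_, mul_pos hc hIoc, _, mul_pos (exp_pos (3 / 2 * R)) hIoi, fun r hr hrR => ⟨?_, ?_⟩⟩
  · rw [mul_assoc, mul_comm (∫ t in Ioc 0 1, _)]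
    refine mul_rpow_le_F hs hr fun t ht => hle t ⟨ht.1.le, ht.2.trans ?_⟩ r ⟨hr.le, hrR⟩
    gcongr
  · rw [mul_assoc, mul_comm (∫ t in Ioi 0, _)]
    refine (F_le_exp_mul_rpow hs hr).trans ?_
    gcongr

theorem F_estimate_le_one (N : ℕ) (hN3 : 3 ≤ N) (s : ℝ) (hs0 : 0 < s) (hs1 : s < 1) :
    ∃ C₃ > (0 : ℝ), ∃ C₃' > (0 : ℝ),
      ∀ r : ℝ, 0 < r → r ≤ 1 →
        C₃ * r ^ (-((N : ℝ) - 2 * s)) ≤ F N s r ∧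
          F N s r ≤ C₃' * r ^ (-((N : ℝ) - 2 * s)) := by
  have hdim : (3 : ℝ) ≤ N := by exact_mod_cast hN3
  exact F_estimate_le_one_general N s (by linarith) 1
end

section
/- (Exact long-distance asymptotics.) For every integer N ≥ 3 and every s with 0 < s < 1, there exists a real number L > 0 such that e^{(N-1)r} · r^{1-s} · F_{N,s}(r) converges to L as r → ∞. -/
open Real MeasureTheory Set Filter

open scoped Topology

/-!
Substituting `t = r eᵘ / (N - 1)`, which puts the maximum of the exponent of `hN` at `u = 0`, turns
that exponent into `-(N - 1) r - r (N - 1) (cosh u - 1) / 2`. The first term is the claimed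
exponential decay. The second has a nondegenerate quadratic maximum at `u = 0`, so Laplace's method,
i.e. dominated convergence after the rescaling `u = z / √r`, contributes a factor `√(1 / r)` and a
Gaussian integral; the remaining factors grow at most exponentially in `|u|` and enter the limit
only through their value at `u = 0`.
-/

section LaplaceMethod

variable {E : Type*} [NormedAddCommGroup E] [NormedSpace ℝ E]

theorem integral_comp_mul_exp (g : ℝ → E) {τ : ℝ} (hτ : 0 < τ) :
    ∫ u, (τ * exp u) • g (τ * exp u) = ∫ t in Ioi 0, g t := by
  have exp_substitution : ∫ u, exp u • g (τ * exp u) = ∫ v in Ioi 0, g (τ * v) := by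
    rw [← range_exp, ← image_univ,
      integral_image_eq_integral_abs_deriv_smul MeasurableSet.univ
        (fun u _ ↦ (hasDerivAt_exp u).hasDerivWithinAt) exp_injective.injOn]
    simp only [abs_exp, setIntegral_univ]
  simp_rw [mul_smul]
  rw [integral_smul, exp_substitution, integral_comp_mul_left_Ioi' g 0 hτ, mul_zero]

theorem sqrt_smul_integral_eq_integral_comp_div_sqrt (f : ℝ → E) (r : ℝ) :
    √r • ∫ u, f u = ∫ z, f (z / √r) := by
  rw [Measure.integral_comp_div, abs_of_nonneg (sqrt_nonneg r)]

theorem tendsto_mul_comp_div_sqrt {φ : ℝ → ℝ} {a z : ℝ}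
    (hφ : Tendsto (fun u ↦ φ u / u ^ 2) (𝓝[≠] 0) (𝓝 a)) (hz : z ≠ 0) :
    Tendsto (fun r ↦ r * φ (z / √r)) atTop (𝓝 (a * z ^ 2)) := by
  have rescaled_point : Tendsto (fun r ↦ z / √r) atTop (𝓝[≠] 0) := by
    refine tendsto_nhdsWithin_iff.2 ⟨tendsto_sqrt_atTop.const_div_atTop z, ?_⟩
    filter_upwards [eventually_gt_atTop 0] with r hr
    exact div_ne_zero hz (sqrt_pos.2 hr).ne'
  refine ((hφ.comp rescaled_point).mul_const (z ^ 2)).congr' ?_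
  filter_upwards [eventually_gt_atTop 0] with r hr
  have : r ≠ 0 := hr.ne'
  simp only [Function.comp_apply, div_pow, sq_sqrt hr.le]
  field_simp

theorem norm_exp_neg_mul_smul_le {φ : ℝ → ℝ} {g : ℝ → E} {b C K r z : ℝ} (hb : 0 < b)
    (hφ : ∀ u, b * u ^ 2 ≤ φ u) (hg : ∀ u, ‖g u‖ ≤ C * exp (K * u ^ 2))
    (hr : 0 < r) (hKr : 2 * K / b ≤ r) :
    ‖exp (-(r * φ (z / √r))) • g (z / √r)‖ ≤ C * exp (-(b / 2) * z ^ 2) := by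
  have hC : 0 ≤ C := by simpa using (norm_nonneg _).trans (hg 0)
  have sq_rescaled : (z / √r) ^ 2 = z ^ 2 / r := by rw [div_pow, sq_sqrt hr.le]
  have phase_le : -(r * φ (z / √r)) ≤ -(b * z ^ 2) := by
    have h := mul_le_mul_of_nonneg_left (hφ (z / √r)) hr.le
    rw [sq_rescaled] at h
    calc -(r * φ (z / √r)) ≤ -(r * (b * (z ^ 2 / r))) := neg_le_neg h
      _ = -(b * z ^ 2) := by field_simp
  have growth_le : K * (z / √r) ^ 2 ≤ b / 2 * z ^ 2 := by
    rw [sq_rescaled, mul_div_assoc', div_le_iff₀ hr]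
    have : K ≤ b / 2 * r := by rw [div_le_iff₀ hb] at hKr; linarith
    nlinarith [sq_nonneg z]
  calc ‖exp (-(r * φ (z / √r))) • g (z / √r)‖
      = exp (-(r * φ (z / √r))) * ‖g (z / √r)‖ := by rw [norm_smul, norm_of_nonneg (exp_nonneg _)]
    _ ≤ exp (-(b * z ^ 2)) * (C * exp (b / 2 * z ^ 2)) := by
        gcongr
        exact (hg _).trans (by gcongr)
    _ = C * exp (-(b / 2) * z ^ 2) := by
        rw [mul_left_comm, ← exp_add]
        ring_nf

theorem tendsto_sqrt_smul_integral_exp_neg_mul_smul [CompleteSpace E] {φ : ℝ → ℝ} {g : ℝ → ℝ → E}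
    {g₀ : E} {a b C K : ℝ} (hφ_meas : Measurable φ) (hb : 0 < b) (hφ : ∀ u, b * u ^ 2 ≤ φ u)
    (hφ_lim : Tendsto (fun u ↦ φ u / u ^ 2) (𝓝[≠] 0) (𝓝 a))
    (hg_meas : ∀ᶠ r in atTop, StronglyMeasurable (g r))
    (hg : ∀ᶠ r in atTop, ∀ u, ‖g r u‖ ≤ C * exp (K * u ^ 2))
    (hg_lim : Tendsto (fun p : ℝ × ℝ ↦ g p.1 p.2) (atTop ×ˢ 𝓝 0) (𝓝 g₀)) :
    Tendsto (fun r ↦ √r • ∫ u, exp (-(r * φ u)) • g r u) atTop (𝓝 (√(π / a) • g₀)) := by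
  rw [← integral_gaussian, ← integral_smul_const]
  simp_rw [sqrt_smul_integral_eq_integral_comp_div_sqrt]
  refine tendsto_integral_filter_of_dominated_convergence
    (fun z ↦ C * exp (-(b / 2) * z ^ 2)) ?_ ?_
    ((integrable_exp_neg_mul_sq (half_pos hb)).const_mul C) ?_
  · filter_upwards [hg_meas] with r hr
    have phase_meas : Measurable fun z ↦ exp (-(r * φ (z / √r))) := by fun_prop
    exact (phase_meas.stronglyMeasurable.smul
      (hr.comp_measurable (by fun_prop))).aestronglyMeasurable
  · filter_upwards [hg, eventually_gt_atTop 0, eventually_ge_atTop (2 * K / b)] with r hgr hr hKr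
    exact ae_of_all _ fun z ↦ norm_exp_neg_mul_smul_le hb hφ hgr hr hKr
  · filter_upwards [Measure.ae_ne volume 0] with z hz
    have phase_lim : Tendsto (fun r ↦ exp (-(r * φ (z / √r)))) atTop (𝓝 (exp (-a * z ^ 2))) := by
      rw [neg_mul]
      exact (tendsto_mul_comp_div_sqrt hφ_lim hz).neg.rexp
    exact phase_lim.smul
      (hg_lim.comp (tendsto_id.prodMk (tendsto_sqrt_atTop.const_div_atTop z)))

end LaplaceMethod

section Cosh

theorem cosh_sub_one_eq_two_mul_sinh_half_sq (x : ℝ) : cosh x - 1 = 2 * sinh (x / 2) ^ 2 := by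
  have h := cosh_two_mul (x / 2)
  rw [mul_div_cancel₀ x two_ne_zero, cosh_sq] at h
  linarith

theorem half_mul_sq_le_cosh_sub_one (x : ℝ) : 1 / 2 * x ^ 2 ≤ cosh x - 1 := by
  have sq_le_sinh_sq : (x / 2) ^ 2 ≤ sinh (x / 2) ^ 2 := by
    rw [sq_le_sq, abs_sinh]
    exact self_le_sinh_iff.2 (abs_nonneg _)
  rw [cosh_sub_one_eq_two_mul_sinh_half_sq]
  linarith

theorem tendsto_cosh_sub_one_div_sq :
    Tendsto (fun x ↦ (cosh x - 1) / x ^ 2) (𝓝[≠] 0) (𝓝 (1 / 2)) := by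
  have sinh_deriv : HasDerivAt (fun x : ℝ ↦ sinh (x / 2)) (1 / 2) 0 := by
    simpa using ((hasDerivAt_id (0 : ℝ)).div_const 2).sinh
  have h := (sinh_deriv.tendsto_slope.pow 2).const_mul 2
  rw [show 2 * (1 / 2 : ℝ) ^ 2 = 1 / 2 by norm_num] at h
  refine h.congr fun x ↦ ?_
  rw [cosh_sub_one_eq_two_mul_sinh_half_sq, slope_def_field]
  simp only [sub_zero, zero_div, sinh_zero, div_pow]
  ring

end Cosh

section Amplitude

/-- The slowly varying factor of the Green function integral in the logarithmic time
variable `u`, with `x` standing for `1 / r`. -/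
noncomputable def amplitude (p b c x u : ℝ) : ℝ :=
  exp (p * u) * (1 + x + c * exp u) ^ b

theorem amplitude_zero_zero (p b c : ℝ) : amplitude p b c 0 0 = (1 + c) ^ b := by
  simp [amplitude]

theorem measurable_amplitude (p b c x : ℝ) : Measurable (amplitude p b c x) := by
  unfold amplitude
  fun_prop

variable {c : ℝ}

theorem continuousAt_amplitude (p b : ℝ) (hc : 0 ≤ c) :
    ContinuousAt (fun q : ℝ × ℝ ↦ amplitude p b c q.1 q.2) (0, 0) := by
  unfold amplitude
  refine ContinuousAt.mul (by fun_prop) (ContinuousAt.rpow_const (by fun_prop) (Or.inl ?_))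
  simp only [add_zero, exp_zero, mul_one]
  positivity

theorem rpow_one_add_add_mul_exp_le {x : ℝ} (b u : ℝ) (hc : 0 ≤ c) (hx₀ : 0 ≤ x) (hx₁ : x ≤ 1) :
    (1 + x + c * exp u) ^ b ≤ (2 + c) ^ |b| * exp (|b| * |u|) := by
  have base_ge : 1 ≤ 1 + x + c * exp u := by
    have : 0 ≤ c * exp u := by positivity
    linarith
  have base_le : 1 + x + c * exp u ≤ (2 + c) * exp |u| := by
    have one_le : 1 ≤ exp |u| := one_le_exp (abs_nonneg u)
    have : c * exp u ≤ c * exp |u| := by gcongr; exact le_abs_self u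
    linarith
  calc (1 + x + c * exp u) ^ b ≤ (1 + x + c * exp u) ^ |b| :=
        rpow_le_rpow_of_exponent_le base_ge (le_abs_self b)
    _ ≤ ((2 + c) * exp |u|) ^ |b| := by gcongr
    _ = (2 + c) ^ |b| * exp (|b| * |u|) := by
        rw [mul_rpow (by positivity) (exp_nonneg _), ← exp_mul, mul_comm |u|]

theorem norm_amplitude_le {x : ℝ} (p b u : ℝ) (hc : 0 ≤ c) (hx₀ : 0 ≤ x) (hx₁ : x ≤ 1) :
    ‖amplitude p b c x u‖ ≤
      (2 + c) ^ |b| * exp (|p| + |b|) * exp ((|p| + |b|) * u ^ 2) := by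
  have abs_le_one_add_sq : |u| ≤ 1 + u ^ 2 := by nlinarith [sq_abs u, sq_nonneg (|u| - 1)]
  calc ‖amplitude p b c x u‖ = exp (p * u) * (1 + x + c * exp u) ^ b := by
        rw [amplitude, norm_of_nonneg (by positivity)]
    _ ≤ exp (|p| * |u|) * ((2 + c) ^ |b| * exp (|b| * |u|)) := by
        have exp_le : exp (p * u) ≤ exp (|p| * |u|) :=
          exp_le_exp.2 ((le_abs_self _).trans (abs_mul p u).le)
        exact mul_le_mul exp_le (rpow_one_add_add_mul_exp_le b u hc hx₀ hx₁)
          (by positivity) (exp_nonneg _)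
    _ = (2 + c) ^ |b| * exp ((|p| + |b|) * |u|) := by
        rw [mul_left_comm, ← exp_add, add_mul]
    _ ≤ (2 + c) ^ |b| * exp ((|p| + |b|) * (1 + u ^ 2)) := by gcongr
    _ = (2 + c) ^ |b| * exp (|p| + |b|) * exp ((|p| + |b|) * u ^ 2) := by
        rw [mul_add, mul_one, exp_add, mul_assoc]

theorem tendsto_sqrt_mul_integral_exp_neg_cosh_mul_amplitude {κ : ℝ} (p b : ℝ) (hκ : 0 < κ)
    (hc : 0 ≤ c) :
    Tendsto (fun r ↦ √r * ∫ u, exp (-(r * (κ * (cosh u - 1)))) * amplitude p b c r⁻¹ u) atTop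
      (𝓝 (√(2 * π / κ) * (1 + c) ^ b)) := by
  have phase_lower (u : ℝ) : κ / 2 * u ^ 2 ≤ κ * (cosh u - 1) := by
    nlinarith [half_mul_sq_le_cosh_sub_one u]
  have phase_lim : Tendsto (fun u ↦ κ * (cosh u - 1) / u ^ 2) (𝓝[≠] 0) (𝓝 (κ / 2)) := by
    simpa only [mul_div_assoc, mul_one_div] using tendsto_cosh_sub_one_div_sq.const_mul κ
  have amplitude_bound : ∀ᶠ r : ℝ in atTop, ∀ u, ‖amplitude p b c r⁻¹ u‖ ≤
      (2 + c) ^ |b| * exp (|p| + |b|) * exp ((|p| + |b|) * u ^ 2) := by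
    filter_upwards [eventually_ge_atTop 1] with r hr u
    exact norm_amplitude_le p b u hc (by positivity) (inv_le_one_of_one_le₀ hr)
  have amplitude_lim : Tendsto (fun q : ℝ × ℝ ↦ amplitude p b c q.1⁻¹ q.2) (atTop ×ˢ 𝓝 0)
      (𝓝 ((1 + c) ^ b)) := by
    rw [← amplitude_zero_zero p b c]
    have inv_prod : Tendsto (fun q : ℝ × ℝ ↦ (q.1⁻¹, q.2)) (atTop ×ˢ 𝓝 0) (𝓝 (0, 0)) := by
      rw [nhds_prod_eq]
      exact tendsto_inv_atTop_zero.prodMap tendsto_id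
    exact (continuousAt_amplitude p b hc).tendsto.comp inv_prod
  have h := tendsto_sqrt_smul_integral_exp_neg_mul_smul (by fun_prop) (half_pos hκ) phase_lower
    phase_lim (.of_forall fun r ↦ (measurable_amplitude p b c r⁻¹).stronglyMeasurable)
    amplitude_bound amplitude_lim
  rwa [show π / (κ / 2) = 2 * π / κ by field_simp] at h

end Amplitude

section LogarithmicTime

variable {m r : ℝ}

theorem heat_exponent_at_mul_exp (u : ℝ) (hm : m ≠ 0) (hr : r ≠ 0) :
    -(m ^ 2 * (r / m * exp u)) / 4 - m * r / 2
        - r ^ 2 / (4 * (r / m * exp u)) =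
      -(m * r) + -(r * (m / 2 * (cosh u - 1))) := by
  rw [cosh_eq, exp_neg]
  field_simp
  ring

theorem heat_power_at_mul_exp (n s u : ℝ) (hm : 0 < m) (hr : 0 < r) :
    (4 * π * (r / m * exp u)) ^ (-n / 2) * (r / m * exp u) ^ s =
      (4 * π) ^ (-n / 2) * m ^ (n / 2 - s) * r ^ (s - n / 2) * exp ((s - n / 2) * u) := by
  have time_pos : 0 < r / m * exp u := by positivity
  calc _ = (4 * π) ^ (-n / 2) * (r / m * exp u) ^ (s - n / 2) := by
        rw [mul_rpow (by positivity) time_pos.le, mul_assoc, ← rpow_add time_pos]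
        congr 2
        ring
    _ = _ := by
        rw [mul_rpow (by positivity) (exp_nonneg u), div_rpow hr.le hm.le,
          div_eq_mul_inv (r ^ _), ← rpow_neg hm.le, neg_sub, ← exp_mul, mul_comm u]
        ring

theorem one_add_add_mul_exp_rpow (b u : ℝ) (hm : 0 < m) (hr : 0 < r) :
    (1 + r + r / m * exp u) ^ b = r ^ b * (1 + r⁻¹ + m⁻¹ * exp u) ^ b := by
  rw [← mul_rpow hr.le (by positivity)]
  congr 1
  field_simp
  ring

theorem rpow_mul_one_add_eq_sqrt_mul (n s : ℝ) (hr : 0 < r) :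
    r ^ (1 - s) * r ^ (s - n / 2) * r ^ ((n - 3) / 2) * (1 + r) = √r * (1 + r⁻¹) := by
  have powers_of_r : r ^ (1 - s) * r ^ (s - n / 2) * r ^ ((n - 3) / 2) * r = √r := by
    nth_rewrite 4 [← rpow_one r]
    rw [← rpow_add hr, ← rpow_add hr, ← rpow_add hr, sqrt_eq_rpow]
    ring_nf
  rw [← powers_of_r]
  field_simp
  ring

end LogarithmicTime

theorem hN_mul_rpow_at_mul_exp {N : ℕ} {r : ℝ} (s u : ℝ) (hN_pos : 0 < (N : ℝ) - 1) (hr : 0 < r) :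
    hN N (r / (N - 1) * exp u) r * (r / (N - 1) * exp u) ^ s =
      (4 * π) ^ (-(N : ℝ) / 2) * (N - 1) ^ ((N : ℝ) / 2 - s) * exp (-((N - 1) * r)) *
        (r ^ (s - (N : ℝ) / 2) * r ^ (((N : ℝ) - 3) / 2) * (1 + r)) *
        (exp (-(r * ((N - 1) / 2 * (cosh u - 1)))) *
          amplitude (s - (N : ℝ) / 2) ((N - 3) / 2) (N - 1)⁻¹ r⁻¹ u) := by
  rw [hN, heat_exponent_at_mul_exp u hN_pos.ne' hr.ne', one_add_add_mul_exp_rpow _ u hN_pos hr,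
    exp_add, amplitude]
  linear_combination exp (-((N - 1) * r)) * exp (-(r * ((N - 1) / 2 * (cosh u - 1)))) *
    (r ^ (((N : ℝ) - 3) / 2) * (1 + r⁻¹ + (N - 1 : ℝ)⁻¹ * exp u) ^ (((N : ℝ) - 3) / 2)) *
    (1 + r) * heat_power_at_mul_exp N s u hN_pos hr

theorem exp_mul_rpow_mul_F_eq {N : ℕ} {r : ℝ} (s : ℝ) (hN_pos : 0 < (N : ℝ) - 1) (hr : 0 < r) :
    exp ((N - 1) * r) * r ^ (1 - s) * F N s r =
      (4 * π) ^ (-(N : ℝ) / 2) * (N - 1) ^ ((N : ℝ) / 2 - s) * (1 + r⁻¹) *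
        (√r * ∫ u, exp (-(r * ((N - 1) / 2 * (cosh u - 1)))) *
          amplitude (s - (N : ℝ) / 2) ((N - 3) / 2) (N - 1)⁻¹ r⁻¹ u) := by
  rw [F, ← integral_comp_mul_exp _ (div_pos hr hN_pos), ← mul_assoc, ← integral_const_mul,
    ← integral_const_mul]
  congr 1
  ext u
  have time_pos : 0 < r / ((N : ℝ) - 1) * exp u := by positivity
  have exp_cancel : exp ((N - 1) * r) * exp (-((N - 1) * r)) = 1 := by
    rw [← exp_add, add_neg_cancel, exp_zero]
  rw [smul_eq_mul, rpow_sub_one time_pos.ne', ← mul_div_assoc, mul_div_cancel₀ _ time_pos.ne',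
    hN_mul_rpow_at_mul_exp s u hN_pos hr]
  set prefactor := (4 * π) ^ (-(N : ℝ) / 2) * (N - 1) ^ ((N : ℝ) / 2 - s)
  set integrand := exp (-(r * ((N - 1) / 2 * (cosh u - 1)))) *
    amplitude (s - (N : ℝ) / 2) ((N - 3) / 2) (N - 1)⁻¹ r⁻¹ u
  calc _ = exp ((N - 1) * r) * exp (-((N - 1) * r)) * prefactor * (r ^ (1 - s) *
          r ^ (s - (N : ℝ) / 2) * r ^ (((N : ℝ) - 3) / 2) * (1 + r)) * integrand := by ring
    _ = _ := by
        rw [exp_cancel, rpow_mul_one_add_eq_sqrt_mul N s hr]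
        ring

theorem limit_constant_eq {n : ℝ} (s : ℝ) (hn : 0 < n - 1) :
    (4 * π) ^ (-n / 2) * (n - 1) ^ (n / 2 - s) *
      (√(2 * π / ((n - 1) / 2)) * (1 + (n - 1)⁻¹) ^ ((n - 3) / 2)) =
      (4 * π) ^ ((1 - n) / 2) * n ^ ((n - 3) / 2) * (n - 1) ^ (1 - s) := by
  have n_nonneg : 0 ≤ n := by linarith
  have gaussian_factor :
      √(2 * π / ((n - 1) / 2)) = (4 * π) ^ (1 / 2 : ℝ) * (n - 1) ^ (-(1 / 2) : ℝ) := by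
    rw [show 2 * π / ((n - 1) / 2) = 4 * π / (n - 1) by field_simp; ring, sqrt_eq_rpow,
      div_rpow (by positivity) hn.le, rpow_neg hn.le, div_eq_mul_inv]
  have polynomial_factor :
      (1 + (n - 1)⁻¹) ^ ((n - 3) / 2) = n ^ ((n - 3) / 2) * (n - 1) ^ (-((n - 3) / 2)) := by
    rw [show 1 + (n - 1)⁻¹ = n / (n - 1) by field_simp; ring, div_rpow n_nonneg hn.le,
      rpow_neg hn.le, div_eq_mul_inv]
  have powers_of_four_pi :
      (4 * π) ^ (-n / 2) * (4 * π) ^ (1 / 2 : ℝ) = (4 * π) ^ ((1 - n) / 2) := by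
    rw [← rpow_add (by positivity)]
    ring_nf
  have powers_of_sub_one : (n - 1) ^ (n / 2 - s) * (n - 1) ^ (-(1 / 2) : ℝ) *
      (n - 1) ^ (-((n - 3) / 2)) = (n - 1) ^ (1 - s) := by
    rw [← rpow_add hn, ← rpow_add hn]
    ring_nf
  rw [gaussian_factor, polynomial_factor, ← powers_of_four_pi, ← powers_of_sub_one]
  ring

theorem F_long_distance_asymptotics_general (N : ℕ) (hN2 : 2 ≤ N) (s : ℝ) :
    Tendsto (fun r : ℝ => Real.exp (((N : ℝ) - 1) * r) * r ^ (1 - s) * F N s r) atTop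
      (𝓝 ((4 * π) ^ ((1 - (N : ℝ)) / 2) * (N : ℝ) ^ (((N : ℝ) - 3) / 2) *
        ((N : ℝ) - 1) ^ (1 - s))) := by
  have hN_pos : 0 < (N : ℝ) - 1 := sub_pos.2 (mod_cast hN2)
  have prefactor_lim : Tendsto (fun r : ℝ ↦ 1 + r⁻¹) atTop (𝓝 1) := by
    simpa only [add_zero] using tendsto_inv_atTop_zero.const_add (1 : ℝ)
  have h := (prefactor_lim.const_mul
    ((4 * π) ^ (-(N : ℝ) / 2) * ((N : ℝ) - 1) ^ ((N : ℝ) / 2 - s))).mul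
    (tendsto_sqrt_mul_integral_exp_neg_cosh_mul_amplitude (s - (N : ℝ) / 2) (((N : ℝ) - 3) / 2)
      (half_pos hN_pos) (inv_nonneg.2 hN_pos.le))
  rw [mul_one, limit_constant_eq s hN_pos] at h
  refine h.congr' ?_
  filter_upwards [eventually_gt_atTop 0] with r hr
  exact (exp_mul_rpow_mul_F_eq s hN_pos hr).symm

theorem F_long_distance_asymptotics (N : ℕ) (hN3 : 3 ≤ N) (s : ℝ) (hs0 : 0 < s) (hs1 : s < 1) :
    ∃ L > (0 : ℝ),
      Tendsto (fun r : ℝ => Real.exp (((N : ℝ) - 1) * r) * r ^ (1 - s) * F N s r) atTop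
        (nhds L) := by
  have hN_pos : 0 < (N : ℝ) - 1 := sub_pos.2 (by exact_mod_cast (by omega : 1 < N))
  exact ⟨_, by positivity, F_long_distance_asymptotics_general N (by omega) s⟩
end
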